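/- Let A_k(x) = R_k(x) and B_k(x) = ((P_{k−1}(x) + 1)/P_{k−1}(x)) · R_k(x), where R_k(x) = Σ_{j=0}^{k−1} Π_{i=0}^{j} 1/(x − i) and P_k(x) = 1 + Σ_{j=0}^{k−1} Π_{i=0}^{j} (x − k + i). Then for every natural number k ≥ 1 and every real number x ≥ k + 3, the chain of inequalities A_k(x) < A_{k+1}(x) < K(x)/Γ(x + 1) ≤ B_{k+1}(x) < B_k(x) holds. -/

import Mathlib

open MeasureTheory Set

/-- Kurepa's function for real `x`:
`K(x) = ∫₀^∞ e^{-t} (t^x - 1)/(t - 1) dt`. -/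
noncomputable def kurepa (x : ℝ) : ℝ :=
  ∫ t in Ioi (0 : ℝ), Real.exp (-t) * ((t ^ x - 1) / (t - 1))

/-- The rational function `R k x = ∑_{j=0}^{k-1} ∏_{i=0}^{j} 1/(x-i)`. -/
noncomputable def kurepaR (k : ℕ) (x : ℝ) : ℝ :=
  ∑ j ∈ Finset.range k, ∏ i ∈ Finset.range (j + 1), (1 / (x - (i : ℝ)))

/-- The polynomial `P k x = 1 + ∑_{j=0}^{k-1} ∏_{i=0}^{j} (x - k + i)`. -/
noncomputable def kurepaP (k : ℕ) (x : ℝ) : ℝ :=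
  1 + ∑ j ∈ Finset.range k, ∏ i ∈ Finset.range (j + 1), (x - (k : ℝ) + (i : ℝ))

/-- The lower bound `A_k(x) = R_k(x)`. -/
noncomputable def kurepaA (k : ℕ) (x : ℝ) : ℝ := kurepaR k x

/-- The upper bound `B_k(x) = ((P_{k-1}(x)+1)/P_{k-1}(x)) R_k(x)`. -/
noncomputable def kurepaB (k : ℕ) (x : ℝ) : ℝ :=
  ((kurepaP (k - 1) x + 1) / kurepaP (k - 1) x) * kurepaR k x

/-! The recurrence `K(x) = K(x - 1) + Γ(x)` gives `K(x) / Γ(x + 1) = R_n(x) + K(x - n) / Γ(x + 1)`,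
and `B_n(x)` is `R_n(x)` plus the last term of `R_n(x)`, so everything reduces to
`0 < K(y) ≤ Γ(y + 1)` for `y ≥ 2`. By the recurrence the upper bound says `K(z) ≤ z Γ(z + 1)` for
`z = y - 1 ≥ 1`. It follows from the tangent-line bound
`(t ^ z - 1) / (t - 1) ≤ z t ^ z - z (z + 1) / 2 * (t - 1)` at the mean `t = 1` of the exponential
distribution, because `t - 1` integrates to `0` against `e^{-t}`. -/

section PowerQuotient

variable {x t : ℝ}

lemma rpow_sub_one_mul_sub_one_nonneg (hx : 0 ≤ x) (ht : 0 ≤ t) :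
    0 ≤ (t ^ x - 1) * (t - 1) := by
  rcases le_total t 1 with h | h
  · exact mul_nonneg_of_nonpos_of_nonpos
      (sub_nonpos.2 (Real.rpow_le_one ht h hx)) (sub_nonpos.2 h)
  · exact mul_nonneg (sub_nonneg.2 (Real.one_le_rpow h hx)) (sub_nonneg.2 h)

lemma rpow_sub_one_div_sub_one_nonneg (hx : 0 ≤ x) (ht : 0 ≤ t) :
    0 ≤ (t ^ x - 1) / (t - 1) :=
  div_nonneg_iff.2 (mul_nonneg_iff.1 (rpow_sub_one_mul_sub_one_nonneg hx ht))

lemma rpow_add_one_sub_one_div_sub_one (ht : 0 < t) (ht1 : t ≠ 1) :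
    (t ^ (x + 1) - 1) / (t - 1) = (t ^ x - 1) / (t - 1) + t ^ x := by
  have : t - 1 ≠ 0 := sub_ne_zero.2 ht1
  rw [Real.rpow_add_one ht.ne']
  field_simp
  ring

lemma rpow_sub_one_div_sub_one_le_rpow_add_one (ht : 0 < t) :
    (t ^ x - 1) / (t - 1) ≤ (t ^ (x + 1) - 1) / (t - 1) := by
  rcases eq_or_ne t 1 with rfl | ht1
  · simp
  · rw [rpow_add_one_sub_one_div_sub_one ht ht1]
    exact le_add_of_nonneg_right (by positivity)

lemma monotoneOn_tangent_gap_mul_sub_one (hx : 1 ≤ x) :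
    MonotoneOn
      (fun t : ℝ ↦ (x * t ^ x - x * (x + 1) / 2 * (t - 1)) * (t - 1) - (t ^ x - 1)) (Ioi 0) := by
  -- Clearing the denominator `t - 1` from the tangent-line bound makes the derivative factor.
  have hderiv (t : ℝ) (ht : 0 < t) :
      HasDerivAt (fun t : ℝ ↦ (x * t ^ x - x * (x + 1) / 2 * (t - 1)) * (t - 1) - (t ^ x - 1))
        (x * (x + 1) * ((t ^ (x - 1) - 1) * (t - 1))) t := by
    have hpow : HasDerivAt (fun t : ℝ ↦ t ^ x) (x * t ^ (x - 1)) t :=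
      Real.hasDerivAt_rpow_const (Or.inl ht.ne')
    have hsub : HasDerivAt (fun t : ℝ ↦ t - 1) 1 t := (hasDerivAt_id t).sub_const 1
    have hxt : t ^ x = t ^ (x - 1) * t := by rw [← Real.rpow_add_one ht.ne', sub_add_cancel]
    refine ((((hpow.const_mul x).sub (hsub.const_mul (x * (x + 1) / 2))).mul hsub).sub
      (hpow.sub_const 1)).congr_deriv ?_
    simp only [Pi.sub_apply, hxt]
    ring
  refine monotoneOn_of_hasDerivWithinAt_nonneg (convex_Ioi 0)
    (fun t ht ↦ (hderiv t ht).continuousAt.continuousWithinAt)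
    (fun t ht ↦ (hderiv t (interior_subset ht)).hasDerivWithinAt) fun t ht ↦ ?_
  have ht0 : 0 < t := interior_subset ht
  have := rpow_sub_one_mul_sub_one_nonneg (sub_nonneg.2 hx) ht0.le
  positivity

lemma rpow_sub_one_div_sub_one_le_tangent (hx : 1 ≤ x) (ht : 0 < t) :
    (t ^ x - 1) / (t - 1) ≤ x * t ^ x - x * (x + 1) / 2 * (t - 1) := by
  have hmono := monotoneOn_tangent_gap_mul_sub_one hx
  have one_mem : (1 : ℝ) ∈ Ioi 0 := mem_Ioi.2 one_pos
  rcases lt_trichotomy t 1 with h | rfl | h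
  · rw [div_le_iff_of_neg (sub_neg.2 h)]
    simpa using hmono ht one_mem h.le
  · simp only [sub_self, div_zero, mul_zero, sub_zero, Real.one_rpow, mul_one]
    linarith
  · rw [div_le_iff₀ (sub_pos.2 h)]
    simpa using hmono one_mem ht h.le

end PowerQuotient

section ExponentialIntegrals

variable {x : ℝ}

lemma integrableOn_exp_neg_mul_rpow (hx : -1 < x) :
    IntegrableOn (fun t : ℝ ↦ Real.exp (-t) * t ^ x) (Ioi 0) := by
  simpa using Real.GammaIntegral_convergent (s := x + 1) (by linarith)

lemma integral_exp_neg_mul_rpow_eq_Gamma (hx : -1 < x) :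
    ∫ t in Ioi (0 : ℝ), Real.exp (-t) * t ^ x = Real.Gamma (x + 1) := by
  simp [Real.Gamma_eq_integral (s := x + 1) (by linarith)]

lemma integrableOn_exp_neg_mul_sub_one :
    IntegrableOn (fun t : ℝ ↦ Real.exp (-t) * (t - 1)) (Ioi 0) := by
  simpa [mul_sub, Pi.sub_def] using (integrableOn_exp_neg_mul_rpow (x := 1) (by norm_num)).sub
    (integrableOn_exp_neg_mul_rpow (x := 0) (by norm_num))

lemma integral_exp_neg_mul_sub_one :
    ∫ t in Ioi (0 : ℝ), Real.exp (-t) * (t - 1) = 0 := by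
  have h := integral_sub (integrableOn_exp_neg_mul_rpow (x := 1) (by norm_num))
    (integrableOn_exp_neg_mul_rpow (x := 0) (by norm_num))
  rw [integral_exp_neg_mul_rpow_eq_Gamma (by norm_num),
    integral_exp_neg_mul_rpow_eq_Gamma (by norm_num)] at h
  simpa [mul_sub, one_add_one_eq_two] using h

lemma integrableOn_exp_neg_mul_tangent (hx : -1 < x) (c : ℝ) :
    IntegrableOn (fun t : ℝ ↦ Real.exp (-t) * (x * t ^ x - c * (t - 1))) (Ioi 0) := by
  simp only [mul_sub (Real.exp _) (x * _), mul_left_comm (Real.exp _)]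
  exact ((integrableOn_exp_neg_mul_rpow hx).const_mul x).sub
    (integrableOn_exp_neg_mul_sub_one.const_mul c)

lemma integral_exp_neg_mul_tangent (hx : -1 < x) (c : ℝ) :
    ∫ t in Ioi (0 : ℝ), Real.exp (-t) * (x * t ^ x - c * (t - 1)) = x * Real.Gamma (x + 1) := by
  simp only [mul_sub (Real.exp _) (x * _), mul_left_comm (Real.exp _)]
  rw [integral_sub ((integrableOn_exp_neg_mul_rpow hx).const_mul x)
      (integrableOn_exp_neg_mul_sub_one.const_mul c),
    integral_const_mul, integral_const_mul, integral_exp_neg_mul_rpow_eq_Gamma hx,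
    integral_exp_neg_mul_sub_one, mul_zero, sub_zero]

end ExponentialIntegrals

section Kurepa

variable {x : ℝ}

lemma integrableOn_kurepa (hx : 0 ≤ x) :
    IntegrableOn (fun t : ℝ ↦ Real.exp (-t) * ((t ^ x - 1) / (t - 1))) (Ioi 0) := by
  refine (integrableOn_exp_neg_mul_tangent (x := x + 1) (by linarith)
    ((x + 1) * (x + 1 + 1) / 2)).mono' (by fun_prop) ?_
  filter_upwards [ae_restrict_mem measurableSet_Ioi] with t ht
  have hnonneg := rpow_sub_one_div_sub_one_nonneg hx (le_of_lt ht)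
  rw [Real.norm_of_nonneg (by positivity)]
  gcongr
  exact (rpow_sub_one_div_sub_one_le_rpow_add_one ht).trans
    (rpow_sub_one_div_sub_one_le_tangent (by linarith) ht)

lemma kurepa_add_one (hx : 0 ≤ x) : kurepa (x + 1) = kurepa x + Real.Gamma (x + 1) := by
  rw [← integral_exp_neg_mul_rpow_eq_Gamma (by linarith), kurepa, kurepa,
    ← integral_add (integrableOn_kurepa hx) (integrableOn_exp_neg_mul_rpow (by linarith))]
  apply integral_congr_ae
  filter_upwards [ae_restrict_mem measurableSet_Ioi, Measure.ae_ne (volume.restrict (Ioi 0)) 1]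
    with t ht ht1
  rw [rpow_add_one_sub_one_div_sub_one ht ht1, mul_add]

lemma kurepa_pos (hx : 0 < x) : 0 < kurepa x := by
  have hnonneg : ∀ t ∈ Ioi (0 : ℝ), 0 ≤ Real.exp (-t) * ((t ^ x - 1) / (t - 1)) := fun t ht ↦
    mul_nonneg (Real.exp_nonneg _) (rpow_sub_one_div_sub_one_nonneg hx.le (le_of_lt ht))
  rw [kurepa, setIntegral_pos_iff_support_of_nonneg_ae
    (ae_restrict_of_forall_mem measurableSet_Ioi hnonneg) (integrableOn_kurepa hx.le)]
  have hsupport : Ioi (1 : ℝ) ⊆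
      Function.support (fun t : ℝ ↦ Real.exp (-t) * ((t ^ x - 1) / (t - 1))) ∩ Ioi 0 :=
    fun t ht ↦ ⟨(mul_pos (Real.exp_pos _) (div_pos (sub_pos.2 (Real.one_lt_rpow ht hx))
      (sub_pos.2 ht))).ne', mem_Ioi.2 (zero_lt_one.trans ht)⟩
  exact (by simp : 0 < volume (Ioi (1 : ℝ))).trans_le (measure_mono hsupport)

lemma kurepa_le_mul_Gamma (hx : 1 ≤ x) : kurepa x ≤ x * Real.Gamma (x + 1) := by
  have hx' : -1 < x := by linarith
  rw [← integral_exp_neg_mul_tangent hx' (x * (x + 1) / 2), kurepa]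
  refine setIntegral_mono_on (integrableOn_kurepa (by linarith))
    (integrableOn_exp_neg_mul_tangent hx' _) measurableSet_Ioi fun t ht ↦ ?_
  gcongr
  exact rpow_sub_one_div_sub_one_le_tangent hx ht

lemma kurepa_le_Gamma_add_one (hx : 2 ≤ x) : kurepa x ≤ Real.Gamma (x + 1) := by
  have hle := kurepa_le_mul_Gamma (x := x - 1) (by linarith)
  have hrec := kurepa_add_one (x := x - 1) (by linarith)
  rw [sub_add_cancel] at hle hrec
  rw [Real.Gamma_add_one (by linarith)]
  linarith

end Kurepa

section Expansion

/-- The reciprocal falling factorial `1 / (x (x - 1) ⋯ (x - n + 1))`. The summand of index `j` in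
`kurepaR` is `invFallingFactorial (j + 1)`. -/
noncomputable def invFallingFactorial (n : ℕ) (x : ℝ) : ℝ :=
  ∏ i ∈ Finset.range n, (1 / (x - (i : ℝ)))

variable {n : ℕ} {x : ℝ}

lemma invFallingFactorial_succ (n : ℕ) (x : ℝ) :
    invFallingFactorial (n + 1) x = invFallingFactorial n x * (1 / (x - n)) :=
  Finset.prod_range_succ _ _

lemma invFallingFactorial_pos (hn : (n : ℝ) < x + 1) : 0 < invFallingFactorial n x := by
  refine Finset.prod_pos fun i hi ↦ one_div_pos.2 ?_
  have : (i : ℝ) + 1 ≤ n := mod_cast Finset.mem_range.1 hi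
  linarith

lemma Gamma_add_one_mul_invFallingFactorial (hn : (n : ℝ) < x + 1) :
    Real.Gamma (x + 1) * invFallingFactorial n x = Real.Gamma (x - n + 1) := by
  induction n with
  | zero => simp [invFallingFactorial]
  | succ n ih =>
    push_cast at hn ⊢
    have hne : x - n ≠ 0 := by linarith
    rw [invFallingFactorial_succ, ← mul_assoc, ih (by linarith), Real.Gamma_add_one hne,
      show x - (n + 1) + 1 = x - n by ring]
    field_simp

lemma kurepaR_succ (n : ℕ) (x : ℝ) :
    kurepaR (n + 1) x = kurepaR n x + invFallingFactorial (n + 1) x :=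
  Finset.sum_range_succ _ _

lemma kurepa_eq_kurepa_sub_add (hn : (n : ℝ) ≤ x) :
    kurepa x = kurepa (x - n) + Real.Gamma (x + 1) * kurepaR n x := by
  induction n with
  | zero => simp [kurepaR]
  | succ n ih =>
    have hrec := kurepa_add_one (sub_nonneg.2 hn)
    have hGamma := Gamma_add_one_mul_invFallingFactorial (hn.trans_lt (lt_add_one x))
    rw [kurepaR_succ, mul_add, hGamma, ih (by push_cast at hn; linarith)]
    rw [show x - (n + 1 : ℕ) + 1 = x - n by push_cast; ring] at hrec ⊢
    linarith

lemma kurepa_div_Gamma_eq (hn : (n : ℝ) ≤ x) :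
    kurepa x / Real.Gamma (x + 1) = kurepaR n x + kurepa (x - n) / Real.Gamma (x + 1) := by
  have hx : 0 < x + 1 := by linarith [n.cast_nonneg (α := ℝ)]
  have hGamma : Real.Gamma (x + 1) ≠ 0 := (Real.Gamma_pos_of_pos hx).ne'
  rw [kurepa_eq_kurepa_sub_add hn, add_div, mul_div_cancel_left₀ _ hGamma, add_comm]

lemma kurepaP_succ (n : ℕ) (x : ℝ) : kurepaP (n + 1) x = 1 + (x - (n + 1)) * kurepaP n x := by
  have hshift (j : ℕ) :
      ∏ i ∈ Finset.range (j + 1 + 1), (x - ((n + 1 : ℕ) : ℝ) + (i : ℝ)) =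
        (x - (n + 1)) * ∏ i ∈ Finset.range (j + 1), (x - (n : ℝ) + (i : ℝ)) := by
    rw [Finset.prod_range_succ', mul_comm]
    congr 1
    · simp
    · refine Finset.prod_congr rfl fun i _ ↦ ?_
      push_cast
      ring
  simp only [kurepaP, Finset.sum_range_succ' _ n, hshift, ← Finset.mul_sum]
  simp only [zero_add, Finset.prod_range_one, Nat.cast_add, Nat.cast_one, Nat.cast_zero]
  ring

lemma kurepaP_pos (hn : (n : ℝ) ≤ x) : 0 < kurepaP n x := by
  induction n with
  | zero => simp [kurepaP]
  | succ n ih =>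
    push_cast at hn
    have := ih (by linarith)
    have : 0 ≤ x - (n + 1) := sub_nonneg.2 hn
    rw [kurepaP_succ]
    positivity

lemma kurepaR_succ_eq_kurepaP_mul (hn : (n : ℝ) < x) :
    kurepaR (n + 1) x = kurepaP n x * invFallingFactorial (n + 1) x := by
  induction n with
  | zero => simp [kurepaP, kurepaR, invFallingFactorial]
  | succ n ih =>
    push_cast at hn
    have : x - (n + 1) ≠ 0 := (sub_pos.2 hn).ne'
    rw [kurepaR_succ, ih (by linarith), kurepaP_succ, invFallingFactorial_succ (n + 1)]
    push_cast
    field_simp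
    ring

lemma kurepaB_succ (hn : (n : ℝ) < x) :
    kurepaB (n + 1) x = kurepaR (n + 1) x + invFallingFactorial (n + 1) x := by
  have := kurepaP_pos hn.le
  rw [kurepaB, Nat.add_sub_cancel, kurepaR_succ_eq_kurepaP_mul hn]
  field_simp

end Expansion

section Bounds

variable {n : ℕ} {x : ℝ}

lemma kurepaA_lt_kurepaA_succ (hn : (n : ℝ) < x) : kurepaA n x < kurepaA (n + 1) x := by
  rw [kurepaA, kurepaA, kurepaR_succ]
  exact lt_add_of_pos_right _ (invFallingFactorial_pos (by push_cast; linarith))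

lemma kurepaA_lt_kurepa_div_Gamma (hn : (n : ℝ) < x) :
    kurepaA n x < kurepa x / Real.Gamma (x + 1) := by
  have hx : 0 < x + 1 := by linarith [n.cast_nonneg (α := ℝ)]
  rw [kurepaA, kurepa_div_Gamma_eq hn.le]
  exact lt_add_of_pos_right _
    (div_pos (kurepa_pos (sub_pos.2 hn)) (Real.Gamma_pos_of_pos hx))

lemma kurepa_div_Gamma_le_kurepaB_succ (hn : (n : ℝ) + 3 ≤ x) :
    kurepa x / Real.Gamma (x + 1) ≤ kurepaB (n + 1) x := by
  have hx : 0 < x + 1 := by linarith [n.cast_nonneg (α := ℝ)]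
  have hn' : ((n + 1 : ℕ) : ℝ) ≤ x := by push_cast; linarith
  rw [kurepa_div_Gamma_eq hn', kurepaB_succ (by linarith)]
  gcongr
  rw [div_le_iff₀' (Real.Gamma_pos_of_pos hx),
    Gamma_add_one_mul_invFallingFactorial (by linarith)]
  exact kurepa_le_Gamma_add_one (by push_cast; linarith)

lemma kurepaB_succ_lt_kurepaB (hn : 1 ≤ n) (hx : (n : ℝ) + 2 < x) :
    kurepaB (n + 1) x < kurepaB n x := by
  have hpos : 0 < invFallingFactorial n x := invFallingFactorial_pos (by linarith)
  have htwo : 2 * invFallingFactorial (n + 1) x < invFallingFactorial n x := by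
    rw [invFallingFactorial_succ, mul_one_div, ← mul_div_assoc, div_lt_iff₀ (by linarith), mul_comm]
    gcongr
    linarith
  obtain ⟨m, rfl⟩ := Nat.exists_eq_add_of_le' hn
  rw [kurepaB_succ (by linarith), kurepaB_succ (by push_cast at hx; linarith), kurepaR_succ]
  linarith

end Bounds

/-- For `k ≥ 1` and `x ≥ k + 3`,
`A_k(x) < A_{k+1}(x) < K(x)/Γ(x+1) ≤ B_{k+1}(x) < B_k(x)`. -/
theorem kurepa_bounds_monotone (k : ℕ) (hk : 1 ≤ k) (x : ℝ)
    (hx : (k : ℝ) + 3 ≤ x) :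
    kurepaA k x < kurepaA (k + 1) x ∧
    kurepaA (k + 1) x < kurepa x / Real.Gamma (x + 1) ∧
    kurepa x / Real.Gamma (x + 1) ≤ kurepaB (k + 1) x ∧
    kurepaB (k + 1) x < kurepaB k x :=
  ⟨kurepaA_lt_kurepaA_succ (by linarith),
    kurepaA_lt_kurepa_div_Gamma (by push_cast; linarith),
    kurepa_div_Gamma_le_kurepaB_succ hx,
    kurepaB_succ_lt_kurepaB hk (by linarith)⟩
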